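/- arXiv:1910.03857 — 3 statements merged into one kernel-verified Lean document; each statement's English description precedes it below -/
import Mathlib

section
/- Suppose there is a constant C_ρ ≥ 1 with π̃(a|s)/π(a|s) ≤ C_ρ for all s ∈ S, a ∈ A, let ε = max_{s∈S, a∈A} |A^π(s,a)|, and suppose there is K ∈ ℕ such that for every t the vector α_t ∈ [0,1]^{t+1} has at most K nonzero coordinates. Then for every horizon T ∈ ℕ, the random variable L̂_T(τ) = ∑_{t=0}^{T} γ^t ρ^{α_t}_{0:t}(τ) · A^π(s_t, a_t) on trajectories τ ∼ π satisfies Var_{τ∼π}(L̂_T) ≤ ε² C_ρ^{2K} / (1 − γ)². -/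
open scoped BigOperators

namespace PolicyOpt

/-- A finite Markov decision process. -/
structure MDP (S A : Type*) [Fintype S] [Fintype A] where
  p : S → A → S → ℝ
  r : S → A → ℝ
  γ : ℝ
  μ0 : S → ℝ
  p_nonneg : ∀ s a s', 0 ≤ p s a s'
  p_sum_one : ∀ s a, ∑ s', p s a s' = 1
  μ0_nonneg : ∀ s, 0 ≤ μ0 s
  μ0_sum_one : ∑ s, μ0 s = 1
  γ_pos : 0 < γ
  γ_lt_one : γ < 1

variable {S A : Type*} [Fintype S] [Fintype A] [DecidableEq S] [DecidableEq A]

/-- A policy assigns to every state a probability distribution over actions. -/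
def IsPolicy (π : S → A → ℝ) : Prop :=
  (∀ s a, 0 ≤ π s a) ∧ ∀ s, ∑ a, π s a = 1

/-- Trajectory prefixes (histories) consisting of `t+1` state-action pairs. -/
abbrev Hist (S A : Type*) (t : ℕ) := Fin (t + 1) → S × A

/-- Probability of a history of length `t+1` when following policy `π`
starting from the initial distribution `μ0`. -/
noncomputable def prob (M : MDP S A) (π : S → A → ℝ) (t : ℕ) (h : Hist S A t) : ℝ :=
  (M.μ0 (h 0).1 * π (h 0).1 (h 0).2) *
    ∏ i : Fin t,
      (M.p (h i.castSucc).1 (h i.castSucc).2 (h i.succ).1 * π (h i.succ).1 (h i.succ).2)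

/-- Probability of a history of length `t+1` when following policy `π`,
conditioned on starting in state `s` with first action `a`. -/
noncomputable def probFrom (M : MDP S A) (π : S → A → ℝ) (s : S) (a : A) (t : ℕ) (h : Hist S A t) : ℝ :=
  (if h 0 = (s, a) then (1 : ℝ) else 0) *
    ∏ i : Fin t,
      (M.p (h i.castSucc).1 (h i.castSucc).2 (h i.succ).1 * π (h i.succ).1 (h i.succ).2)

/-- The last state-action pair of a history. -/
def lastSA {t : ℕ} (h : Hist S A t) : S × A := h (Fin.last t)

/-- State-action value `Q^π(s,a) = E_{τ∼π}[∑_{t≥0} γ^t r(s_t,a_t) | s₀=s, a₀=a]`. -/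
noncomputable def Qval (M : MDP S A) (π : S → A → ℝ) (s : S) (a : A) : ℝ :=
  ∑' t : ℕ, M.γ ^ t * ∑ h : Hist S A t, probFrom M π s a t h * M.r (lastSA h).1 (lastSA h).2

/-- State value `V^π(s)`. -/
noncomputable def Vval (M : MDP S A) (π : S → A → ℝ) (s : S) : ℝ :=
  ∑ a, π s a * Qval M π s a

/-- Advantage `A^π(s,a) = Q^π(s,a) - V^π(s)`. -/
noncomputable def Adv (M : MDP S A) (π : S → A → ℝ) (s : S) (a : A) : ℝ :=
  Qval M π s a - Vval M π s

/-- The value `η(π) = E_{τ∼π} ∑_{t≥0} γ^t r(s_t,a_t)`. -/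
noncomputable def ηval (M : MDP S A) (π : S → A → ℝ) : ℝ :=
  ∑' t : ℕ, M.γ ^ t * ∑ h : Hist S A t, prob M π t h * M.r (lastSA h).1 (lastSA h).2

/-- Normalised discounted state occupancy measure
`d^π(s) = (1-γ) ∑_{t≥0} γ^t Pr_{τ∼π}(s_t = s)`. -/
noncomputable def dOcc (M : MDP S A) (π : S → A → ℝ) (s : S) : ℝ :=
  (1 - M.γ) * ∑' t : ℕ, M.γ ^ t *
    ∑ h : Hist S A t, prob M π t h * (if (lastSA h).1 = s then (1 : ℝ) else 0)

/-- The surrogate objective `L_π(π') = (1/(1-γ)) ∑_s d^π(s) ∑_a π'(a|s) A^π(s,a)`. -/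
noncomputable def Lsur (M : MDP S A) (π π' : S → A → ℝ) : ℝ :=
  (1 - M.γ)⁻¹ * ∑ s, dOcc M π s * ∑ a, π' s a * Adv M π s a

/-- Product of importance sampling ratios `ρ_{0:t}` along a history. -/
noncomputable def ρprod (π π' : S → A → ℝ) {t : ℕ} (h : Hist S A t) : ℝ :=
  ∏ i, π' (h i).1 (h i).2 / π (h i).1 (h i).2

/-- Smoothed product of importance sampling ratios `ρ^{α}_{0:t}`. -/
noncomputable def ρpow (π π' : S → A → ℝ) {t : ℕ} (α : Fin (t + 1) → ℝ) (h : Hist S A t) : ℝ :=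
  ∏ i, (π' (h i).1 (h i).2 / π (h i).1 (h i).2) ^ (α i)

/-- The prefix of length `t+1` of a history of length `T+1` (for `t ≤ T`). -/
def pref {T : ℕ} (h : Hist S A T) (t : Fin (T + 1)) : Hist S A (t : ℕ) :=
  fun i => h (Fin.castLE t.isLt i)


theorem prob_nonneg_aux (M : MDP S A) (π : S → A → ℝ) (hπ : IsPolicy π) (T : ℕ)
    (h : Hist S A T) : 0 ≤ prob M π T h := by
  unfold prob
  refine mul_nonneg (mul_nonneg (M.μ0_nonneg _) (hπ.1 _ _)) ?_
  exact Finset.prod_nonneg fun i _ => mul_nonneg (M.p_nonneg _ _ _) (hπ.1 _ _)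

theorem prob_snoc_aux (M : MDP S A) (π : S → A → ℝ) (T : ℕ)
    (h : Hist S A T) (x : S × A) :
    prob M π (T + 1) (Fin.snoc (α := fun _ => S × A) h x) =
      prob M π T h * (M.p (h (Fin.last T)).1 (h (Fin.last T)).2 x.1 * π x.1 x.2) := by
  unfold prob
  rw [Fin.prod_univ_castSucc, ← mul_assoc]
  have h0 : (Fin.snoc (α := fun _ => S × A) h x : Hist S A (T + 1)) 0 = h 0 := by
    rw [← Fin.castSucc_zero, Fin.snoc_castSucc]
  simp only [h0, Fin.snoc_castSucc, ← Fin.castSucc_succ, Fin.succ_last, Fin.snoc_last]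

theorem prob_sum_aux (M : MDP S A) (π : S → A → ℝ) (hπ : IsPolicy π) (T : ℕ) :
    ∑ h : Hist S A T, prob M π T h = 1 := by
  induction T with
  | zero =>
    rw [← (Equiv.funUnique (Fin 1) (S × A)).symm.sum_comp]
    simp only [prob, Fintype.sum_prod_type]
    simp [← Finset.mul_sum, hπ.2, M.μ0_sum_one]
  | succ T ih =>
    rw [← (Fin.snocEquiv (fun _ : Fin (T + 2) => S × A)).sum_comp, Fintype.sum_prod_type_right]
    rw [← ih]
    refine Finset.sum_congr rfl fun h _ => ?_
    have : ∀ x : S × A, prob M π (T + 1)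
        ((Fin.snocEquiv (fun _ : Fin (T + 2) => S × A)) (x, h)) =
        prob M π T h * (M.p (h (Fin.last T)).1 (h (Fin.last T)).2 x.1 * π x.1 x.2) :=
      fun x => prob_snoc_aux M π T h x
    simp only [this]
    rw [← Finset.mul_sum, Fintype.sum_prod_type]
    simp [← Finset.mul_sum, hπ.2, M.p_sum_one]

theorem rpow_bound_aux (π π' : S → A → ℝ) (hπ' : IsPolicy π')
    (hπpos : ∀ s a, 0 < π s a)
    (Cρ : ℝ) (hCρ : 1 ≤ Cρ) (hratio : ∀ s a, π' s a / π s a ≤ Cρ)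
    {t : ℕ} (α : Fin (t + 1) → ℝ) (hα : ∀ i, α i ∈ Set.Icc (0 : ℝ) 1)
    (K : ℕ) (hK : (Finset.univ.filter fun i => α i ≠ 0).card ≤ K) (h : Hist S A t) :
    0 ≤ ρpow π π' α h ∧ ρpow π π' α h ≤ Cρ ^ K := by
  have hr : ∀ s a, 0 ≤ π' s a / π s a := fun s a => div_nonneg (hπ'.1 s a) (hπpos s a).le
  unfold ρpow
  refine ⟨Finset.prod_nonneg fun i _ => Real.rpow_nonneg (hr _ _) _, ?_⟩
  calc _ ≤ ∏ i, (if α i ≠ 0 then Cρ else 1) := by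
        refine Finset.prod_le_prod (fun i _ => Real.rpow_nonneg (hr _ _) _) fun i _ => ?_
        split_ifs with h0
        · calc _ ≤ Cρ ^ α i := Real.rpow_le_rpow (hr _ _) (hratio _ _) (hα i).1
            _ ≤ Cρ ^ (1 : ℝ) := Real.rpow_le_rpow_of_exponent_le hCρ (hα i).2
            _ = Cρ := Real.rpow_one _
        · simp only [ne_eq, not_not] at h0
          simp [h0]
    _ = Cρ ^ (Finset.univ.filter fun i => α i ≠ 0).card := by
        rw [← Finset.prod_filter, Finset.prod_const]
    _ ≤ Cρ ^ K := pow_le_pow_right₀ hCρ hK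

/-- With sparsity level `K` for the smoothing vectors, the variance of the
truncated smoothed importance-sampling estimator is uniformly bounded. -/
theorem variance_bound_smoothed_IS_sparse
    [Nonempty S] [Nonempty A]
    (M : MDP S A) (π π' : S → A → ℝ)
    (hπ : IsPolicy π) (hπ' : IsPolicy π')
    (hπpos : ∀ s a, 0 < π s a)
    (Cρ : ℝ) (hCρ : 1 ≤ Cρ) (hratio : ∀ s a, π' s a / π s a ≤ Cρ)
    (ε : ℝ)
    (hε : ε = Finset.univ.sup' Finset.univ_nonempty fun q : S × A => |Adv M π q.1 q.2|)
    (α : (t : ℕ) → Fin (t + 1) → ℝ) (hα : ∀ t i, α t i ∈ Set.Icc (0 : ℝ) 1)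
    (K : ℕ) (hK : ∀ t : ℕ, (Finset.univ.filter fun i => α t i ≠ 0).card ≤ K) :
    ∀ T : ℕ,
      (∑ h : Hist S A T, prob M π T h *
          (∑ t : Fin (T + 1),
            M.γ ^ (t : ℕ) * ρpow π π' (α t) (pref h t) * Adv M π (h t).1 (h t).2) ^ 2) -
        (∑ h : Hist S A T, prob M π T h *
          ∑ t : Fin (T + 1),
            M.γ ^ (t : ℕ) * ρpow π π' (α t) (pref h t) * Adv M π (h t).1 (h t).2) ^ 2 ≤
        ε ^ 2 * Cρ ^ (2 * K) / (1 - M.γ) ^ 2 := by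
  intro T
  have hAdv : ∀ s a, |Adv M π s a| ≤ ε := fun s a => by
    rw [hε]
    exact Finset.le_sup' (fun q : S × A => |Adv M π q.1 q.2|) (Finset.mem_univ (s, a))
  have hε0 : 0 ≤ ε := (abs_nonneg _).trans (hAdv (Classical.arbitrary S) (Classical.arbitrary A))
  have hγ : 0 < 1 - M.γ := sub_pos.2 M.γ_lt_one
  have hC : 0 ≤ Cρ ^ K := pow_nonneg (zero_le_one.trans hCρ) K
  have hX : ∀ h : Hist S A T, (∑ t : Fin (T + 1),
      M.γ ^ (t : ℕ) * ρpow π π' (α t) (pref h t) * Adv M π (h t).1 (h t).2) ^ 2 ≤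
      ε ^ 2 * Cρ ^ (2 * K) / (1 - M.γ) ^ 2 := by
    intro h
    have hb : |∑ t : Fin (T + 1),
        M.γ ^ (t : ℕ) * ρpow π π' (α t) (pref h t) * Adv M π (h t).1 (h t).2| ≤
        ε * Cρ ^ K / (1 - M.γ) := by
      calc _ ≤ ∑ t : Fin (T + 1), M.γ ^ (t : ℕ) * (ε * Cρ ^ K) := by
            refine (Finset.abs_sum_le_sum_abs _ _).trans (Finset.sum_le_sum fun t _ => ?_)
            obtain ⟨h1, h2⟩ := rpow_bound_aux π π' hπ' hπpos Cρ hCρ hratio (α t) (hα t) K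
              (hK t) (pref h t)
            rw [abs_mul, abs_mul, abs_of_nonneg h1, abs_of_nonneg (pow_nonneg M.γ_pos.le _),
              mul_assoc, mul_comm ε]
            exact mul_le_mul_of_nonneg_left (mul_le_mul h2 (hAdv _ _) (abs_nonneg _) hC)
              (pow_nonneg M.γ_pos.le _)
        _ = (∑ t ∈ Finset.range (T + 1), M.γ ^ t) * (ε * Cρ ^ K) := by
            rw [← Finset.sum_mul, Fin.sum_univ_eq_sum_range (fun t => M.γ ^ t)]
        _ ≤ (1 - M.γ)⁻¹ * (ε * Cρ ^ K) := by
            refine mul_le_mul_of_nonneg_right ?_ (mul_nonneg hε0 hC)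
            rw [← tsum_geometric_of_lt_one M.γ_pos.le M.γ_lt_one]
            exact (summable_geometric_of_lt_one M.γ_pos.le M.γ_lt_one).sum_le_tsum _
              fun i _ => pow_nonneg M.γ_pos.le _
        _ = _ := by rw [div_eq_inv_mul]
    calc _ ≤ (ε * Cρ ^ K / (1 - M.γ)) ^ 2 := sq_le_sq' (neg_le_of_abs_le hb) (le_of_abs_le hb)
      _ = _ := by rw [div_pow, mul_pow, ← pow_mul, mul_comm K 2]
  refine (sub_le_self _ (sq_nonneg _)).trans ?_
  calc _ ≤ ∑ h : Hist S A T, prob M π T h * (ε ^ 2 * Cρ ^ (2 * K) / (1 - M.γ) ^ 2) :=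
        Finset.sum_le_sum fun h _ =>
          mul_le_mul_of_nonneg_left (hX h) (prob_nonneg_aux M π hπ T h)
    _ = _ := by rw [← Finset.sum_mul, prob_sum_aux M π hπ T, one_mul]

end PolicyOpt
end

section
/- Assume π(a|s) > 0 and π̃(a|s) > 0 for all (s,a), and let ε = max_{s∈S, a∈A} |A^π(s,a)|. Then for every horizon T ∈ ℕ and every choice of vectors α_t ∈ [0,1]^{t+1} (t = 0,…,T), | E_{τ∼π} ∑_{t=0}^{T} γ^t ρ^{α_t}_{0:t}(τ) A^π(s_t,a_t) − E_{τ∼π} ∑_{t=0}^{T} γ^t ρ_{0:t}(τ) A^π(s_t,a_t) | ≤ ε · E_{τ∼π̃} ∑_{t=0}^{T} γ^t | ∏_{i=0}^{t} (π(a_i|s_i)/π̃(a_i|s_i))^{1−α_t^i} − 1 |. -/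
open scoped BigOperators

namespace PolicyOpt

variable {S A : Type*} [Fintype S] [Fintype A] [DecidableEq S] [DecidableEq A]

theorem prob_mul_ρprod (M : MDP S A) (π π' : S → A → ℝ)
    (hπpos : ∀ s a, 0 < π s a) (t : ℕ) (h : Hist S A t) :
    prob M π t h * ρprod π π' h = prob M π' t h := by
  unfold prob ρprod
  rw [Fin.prod_univ_succ]
  have h0 := (hπpos (h 0).1 (h 0).2).ne'
  rw [mul_mul_mul_comm, ← Finset.prod_mul_distrib]
  congr 1
  · field_simp
  · refine Finset.prod_congr rfl fun i _ => ?_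
    have h1 := (hπpos (h i.succ).1 (h i.succ).2).ne'
    field_simp

theorem ρpow_eq (π π' : S → A → ℝ)
    (hπpos : ∀ s a, 0 < π s a) (hπ'pos : ∀ s a, 0 < π' s a) (t : ℕ)
    (α : Fin (t + 1) → ℝ) (h : Hist S A t) :
    ρpow π π' α h = ρprod π π' h *
      ∏ i, (π (h i).1 (h i).2 / π' (h i).1 (h i).2) ^ ((1 : ℝ) - α i) := by
  unfold ρpow ρprod
  rw [← Finset.prod_mul_distrib]
  refine Finset.prod_congr rfl fun i _ => ?_
  have h1 := hπpos (h i).1 (h i).2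
  have h2 := hπ'pos (h i).1 (h i).2
  have hq : 0 < π' (h i).1 (h i).2 / π (h i).1 (h i).2 := div_pos h2 h1
  rw [← inv_div (π' (h i).1 (h i).2), Real.inv_rpow hq.le, ← Real.rpow_neg hq.le]
  nth_rewrite 2 [← Real.rpow_one (π' (h i).1 (h i).2 / π (h i).1 (h i).2)]
  rw [← Real.rpow_add hq]
  congr 1
  ring

theorem prob_nonneg' (M : MDP S A) (π : S → A → ℝ)
    (hπpos : ∀ s a, 0 < π s a) (t : ℕ) (h : Hist S A t) : 0 ≤ prob M π t h := by
  unfold prob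
  exact mul_nonneg (mul_nonneg (M.μ0_nonneg _) (hπpos _ _).le)
    (Finset.prod_nonneg fun i _ => mul_nonneg (M.p_nonneg _ _ _) (hπpos _ _).le)

/-- Bias bound for the truncated smoothed importance-sampling estimator. -/
theorem bias_bound_smoothed_IS
    [Nonempty S] [Nonempty A]
    (M : MDP S A) (π π' : S → A → ℝ)
    (hπ : IsPolicy π) (hπ' : IsPolicy π')
    (hπpos : ∀ s a, 0 < π s a) (hπ'pos : ∀ s a, 0 < π' s a)
    (ε : ℝ)
    (hε : ε = Finset.univ.sup' Finset.univ_nonempty fun q : S × A => |Adv M π q.1 q.2|)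
    (α : (t : ℕ) → Fin (t + 1) → ℝ) (hα : ∀ t i, α t i ∈ Set.Icc (0 : ℝ) 1)
    (T : ℕ) :
    |(∑ t ∈ Finset.range (T + 1), M.γ ^ t *
        ∑ h : Hist S A t, prob M π t h *
          (ρpow π π' (α t) h * Adv M π (lastSA h).1 (lastSA h).2)) -
      ∑ t ∈ Finset.range (T + 1), M.γ ^ t *
        ∑ h : Hist S A t, prob M π t h *
          (ρprod π π' h * Adv M π (lastSA h).1 (lastSA h).2)| ≤
      ε * ∑ t ∈ Finset.range (T + 1), M.γ ^ t *
        ∑ h : Hist S A t, prob M π' t h *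
          |(∏ i, (π (h i).1 (h i).2 / π' (h i).1 (h i).2) ^ ((1 : ℝ) - α t i)) - 1| := by
  have hA : ∀ q : S × A, |Adv M π q.1 q.2| ≤ ε := fun q => by
    rw [hε]
    exact Finset.le_sup' (fun q : S × A => |Adv M π q.1 q.2|) (Finset.mem_univ q)
  rw [← Finset.sum_sub_distrib, Finset.mul_sum]
  refine (Finset.abs_sum_le_sum_abs _ _).trans (Finset.sum_le_sum fun t _ => ?_)
  have hγ : 0 ≤ M.γ ^ t := pow_nonneg M.γ_pos.le t
  rw [← mul_sub, abs_mul, abs_of_nonneg hγ, mul_left_comm]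
  refine mul_le_mul_of_nonneg_left ?_ hγ
  rw [← Finset.sum_sub_distrib, Finset.mul_sum]
  refine (Finset.abs_sum_le_sum_abs _ _).trans (Finset.sum_le_sum fun h _ => ?_)
  have e1 := prob_mul_ρprod M π π' hπpos t h
  have e2 := ρpow_eq π π' hπpos hπ'pos t (α t) h
  have hp := prob_nonneg' M π' hπ'pos t h
  set P := ∏ i, (π (h i).1 (h i).2 / π' (h i).1 (h i).2) ^ ((1 : ℝ) - α t i)
  have e3 : prob M π t h * (ρpow π π' (α t) h * Adv M π (lastSA h).1 (lastSA h).2) -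
      prob M π t h * (ρprod π π' h * Adv M π (lastSA h).1 (lastSA h).2) =
      Adv M π (lastSA h).1 (lastSA h).2 * (prob M π' t h * (P - 1)) := by
    rw [e2, ← e1]
    ring
  rw [e3, abs_mul, abs_mul, abs_of_nonneg hp]
  exact mul_le_mul_of_nonneg_right (hA _) (mul_nonneg hp (abs_nonneg _))

end PolicyOpt
end

section
/- For any two policies π and π̃, η(π̃) − η(π) = (1/(1−γ)) · ∑_{s∈S} d^{π̃}(s) ∑_{a∈A} π̃(a|s) A^π(s,a). -/
open scoped BigOperators

namespace PolicyOpt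

variable {S A : Type*} [Fintype S] [Fintype A] [DecidableEq S] [DecidableEq A]

theorem hasSum_of_eq {u v : ℕ → ℝ} {c : ℝ} (h : ∀ t, u t = v t) (hv : HasSum v c) :
    HasSum u c := by
  rw [funext h]
  exact hv

/-- One-step transition operator on functions of state-action pairs. -/
noncomputable def stepOp (M : MDP S A) (π : S → A → ℝ) : (S × A → ℝ) →ₗ[ℝ] (S × A → ℝ) where
  toFun f x := ∑ y : S × A, (M.p x.1 x.2 y.1 * π y.1 y.2) * f y
  map_add' f g := by
    funext x
    simp [mul_add, Finset.sum_add_distrib]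
  map_smul' c f := by
    funext x
    simp only [Pi.smul_apply, smul_eq_mul, RingHom.id_apply, Finset.mul_sum]
    exact Finset.sum_congr rfl fun y _ => by ring

theorem stepOp_apply (M : MDP S A) (π : S → A → ℝ) (f : S × A → ℝ) (x : S × A) :
    stepOp M π f x = ∑ y : S × A, (M.p x.1 x.2 y.1 * π y.1 y.2) * f y := rfl

theorem hist_sum (M : MDP S A) (π : S → A → ℝ) (w : S × A → ℝ) (t : ℕ) (f : S × A → ℝ) :
    ∑ h : Hist S A t, (w (h 0) * ∏ i : Fin t,
      (M.p (h i.castSucc).1 (h i.castSucc).2 (h i.succ).1 * π (h i.succ).1 (h i.succ).2)) *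
        f (h (Fin.last t)) = ∑ x, w x * ((stepOp M π) ^ t) f x := by
  induction t generalizing f with
  | zero =>
    rw [← (Equiv.funUnique (Fin 1) (S × A)).symm.sum_comp]
    simp
  | succ t ih =>
    rw [pow_succ, Module.End.mul_apply, ← ih]
    rw [← (Fin.snocEquiv (fun _ : Fin (t + 2) => S × A)).sum_comp, Fintype.sum_prod_type,
      Finset.sum_comm]
    refine Finset.sum_congr rfl fun h _ => ?_
    rw [stepOp_apply, Finset.mul_sum]
    refine Finset.sum_congr rfl fun y _ => ?_
    have h0 : (Fin.snocEquiv (fun _ : Fin (t + 2) => S × A)) (y, h) 0 = h 0 := by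
      have := Fin.snoc_castSucc (α := fun _ : Fin (t + 2) => S × A) y h 0
      simpa [Fin.snocEquiv] using this
    have hc : ∀ i : Fin (t + 1),
        (Fin.snocEquiv (fun _ : Fin (t + 2) => S × A)) (y, h) i.castSucc = h i := by
      intro i
      simp [Fin.snocEquiv]
    have hl : (Fin.snocEquiv (fun _ : Fin (t + 2) => S × A)) (y, h) (Fin.last (t + 1)) = y := by
      simp [Fin.snocEquiv]
    rw [Fin.prod_univ_castSucc]
    simp only [h0, hc, hl, Fin.succ_castSucc, Fin.succ_last]
    ring

theorem step_row_sum (M : MDP S A) (π : S → A → ℝ) (hπ : IsPolicy π) (x : S × A) :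
    ∑ y : S × A, M.p x.1 x.2 y.1 * π y.1 y.2 = 1 := by
  rw [Fintype.sum_prod_type]
  simp only [← Finset.mul_sum, hπ.2, mul_one, M.p_sum_one]

theorem stepOp_pow_bound (M : MDP S A) (π : S → A → ℝ) (hπ : IsPolicy π) (t : ℕ)
    (f : S × A → ℝ) (C : ℝ) (hf : ∀ x, |f x| ≤ C) (x : S × A) :
    |((stepOp M π) ^ t) f x| ≤ C := by
  induction t generalizing f with
  | zero => simpa using hf x
  | succ t ih =>
    rw [pow_succ, Module.End.mul_apply]
    refine ih _ fun z => ?_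
    rw [stepOp_apply]
    calc _ ≤ ∑ y : S × A, |(M.p z.1 z.2 y.1 * π y.1 y.2) * f y| := Finset.abs_sum_le_sum_abs _ _
      _ ≤ ∑ y : S × A, (M.p z.1 z.2 y.1 * π y.1 y.2) * C := by
        refine Finset.sum_le_sum fun y _ => ?_
        have h0 : 0 ≤ M.p z.1 z.2 y.1 * π y.1 y.2 := mul_nonneg (M.p_nonneg _ _ _) (hπ.1 _ _)
        rw [abs_mul, abs_of_nonneg h0]
        exact mul_le_mul_of_nonneg_left (hf y) h0
      _ = C := by rw [← Finset.sum_mul, step_row_sum M π hπ, one_mul]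

theorem resolvent_summable (M : MDP S A) (π : S → A → ℝ) (hπ : IsPolicy π)
    (f : S × A → ℝ) (x : S × A) :
    Summable fun t : ℕ => M.γ ^ t * ((stepOp M π) ^ t) f x := by
  have hC : ∀ x, |f x| ≤ ∑ y, |f y| := fun x =>
    Finset.single_le_sum (f := fun y => |f y|) (fun y _ => abs_nonneg _) (Finset.mem_univ x)
  refine Summable.of_norm_bounded
    ((summable_geometric_of_lt_one M.γ_pos.le M.γ_lt_one).mul_right (∑ y, |f y|)) fun t => ?_
  have h0 : 0 ≤ M.γ ^ t := pow_nonneg M.γ_pos.le t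
  rw [Real.norm_eq_abs, abs_mul, abs_of_nonneg h0]
  exact mul_le_mul_of_nonneg_left (stepOp_pow_bound M π hπ t f _ hC x) h0

/-- Discounted sum of the iterates of the transition operator. -/
noncomputable def resolvent (M : MDP S A) (π : S → A → ℝ) (f : S × A → ℝ) (x : S × A) : ℝ :=
  ∑' t : ℕ, M.γ ^ t * ((stepOp M π) ^ t) f x

theorem hasSum_resolvent (M : MDP S A) (π : S → A → ℝ) (hπ : IsPolicy π)
    (f : S × A → ℝ) (x : S × A) :
    HasSum (fun t : ℕ => M.γ ^ t * ((stepOp M π) ^ t) f x) (resolvent M π f x) :=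
  (resolvent_summable M π hπ f x).hasSum

theorem hasSum_weighted (M : MDP S A) (π : S → A → ℝ) (hπ : IsPolicy π)
    (w f : S × A → ℝ) :
    HasSum (fun t : ℕ => M.γ ^ t * ∑ x, w x * ((stepOp M π) ^ t) f x)
      (∑ x, w x * resolvent M π f x) := by
  have h := hasSum_sum (s := Finset.univ)
    fun x (_ : x ∈ Finset.univ) => (hasSum_resolvent M π hπ f x).mul_left (w x)
  refine hasSum_of_eq (fun t => ?_) h
  rw [Finset.mul_sum]
  exact Finset.sum_congr rfl fun x _ => by ring

theorem resolvent_step (M : MDP S A) (π : S → A → ℝ) (hπ : IsPolicy π)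
    (f : S × A → ℝ) (x : S × A) :
    resolvent M π f x = f x + M.γ * resolvent M π (stepOp M π f) x := by
  unfold resolvent
  rw [(resolvent_summable M π hπ f x).tsum_eq_zero_add, ← tsum_mul_left]
  congr 1
  · simp
  · refine tsum_congr fun t => ?_
    rw [pow_succ (stepOp M π), Module.End.mul_apply, pow_succ']
    ring

theorem resolvent_comm (M : MDP S A) (π : S → A → ℝ) (hπ : IsPolicy π)
    (f : S × A → ℝ) (x : S × A) :
    stepOp M π (resolvent M π f) x = resolvent M π (stepOp M π f) x := by
  have h := hasSum_weighted M π hπ (fun y => M.p x.1 x.2 y.1 * π y.1 y.2) f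
  rw [stepOp_apply, ← h.tsum_eq]
  unfold resolvent
  refine tsum_congr fun t => ?_
  rw [← stepOp_apply, ← Module.End.mul_apply, ← pow_succ', pow_succ, Module.End.mul_apply]

theorem resolvent_add_smul (M : MDP S A) (π : S → A → ℝ) (hπ : IsPolicy π)
    (f g : S × A → ℝ) (c : ℝ) (x : S × A) :
    resolvent M π (f + c • g) x = resolvent M π f x + c * resolvent M π g x := by
  have h := (hasSum_resolvent M π hπ f x).add ((hasSum_resolvent M π hπ g x).mul_left c)
  rw [← h.tsum_eq]
  unfold resolvent
  refine tsum_congr fun t => ?_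
  simp only [map_add, map_smul, Pi.add_apply, Pi.smul_apply, smul_eq_mul]
  ring

theorem Qval_eq (M : MDP S A) (π : S → A → ℝ) (s : S) (a : A) :
    Qval M π s a = resolvent M π (fun x => M.r x.1 x.2) (s, a) := by
  unfold Qval resolvent
  refine tsum_congr fun t => ?_
  congr 1
  have h := hist_sum M π (fun x => if x = (s, a) then (1 : ℝ) else 0) t (fun x => M.r x.1 x.2)
  unfold probFrom lastSA
  rw [h]
  simp

theorem hasSum_prob (M : MDP S A) (π : S → A → ℝ) (hπ : IsPolicy π) (f : S × A → ℝ) :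
    HasSum (fun t : ℕ => M.γ ^ t * ∑ h : Hist S A t, prob M π t h * f (lastSA h))
      (∑ x : S × A, (M.μ0 x.1 * π x.1 x.2) * resolvent M π f x) := by
  have h := hasSum_weighted M π hπ (fun x => M.μ0 x.1 * π x.1 x.2) f
  convert h using 3 with t
  exact hist_sum M π (fun x => M.μ0 x.1 * π x.1 x.2) t f

theorem ηval_eq (M : MDP S A) (π : S → A → ℝ) (hπ : IsPolicy π) :
    ηval M π = ∑ x : S × A, (M.μ0 x.1 * π x.1 x.2) * resolvent M π (fun x => M.r x.1 x.2) x :=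
  (hasSum_prob M π hπ (fun x => M.r x.1 x.2)).tsum_eq

theorem ηval_eq_V (M : MDP S A) (π : S → A → ℝ) (hπ : IsPolicy π) :
    ηval M π = ∑ s, M.μ0 s * Vval M π s := by
  rw [ηval_eq M π hπ, Fintype.sum_prod_type]
  refine Finset.sum_congr rfl fun s _ => ?_
  unfold Vval
  rw [Finset.mul_sum]
  refine Finset.sum_congr rfl fun a _ => ?_
  rw [Qval_eq, mul_assoc]

theorem dOcc_sum (M : MDP S A) (π : S → A → ℝ) (hπ : IsPolicy π) (g : S → ℝ) :
    (1 - M.γ)⁻¹ * ∑ s, dOcc M π s * g s =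
      ∑ x : S × A, (M.μ0 x.1 * π x.1 x.2) * resolvent M π (fun x => g x.1) x := by
  have hne : 1 - M.γ ≠ 0 := (sub_pos.2 M.γ_lt_one).ne'
  have h1 := hasSum_sum (s := Finset.univ) fun s (_ : s ∈ Finset.univ) =>
    (hasSum_prob M π hπ (fun x => if x.1 = s then (1 : ℝ) else 0)).mul_right (g s)
  have h2 := hasSum_prob M π hπ (fun x => g x.1)
  have h3 : (1 - M.γ)⁻¹ * ∑ s, dOcc M π s * g s =
      ∑ s, (∑ x : S × A, (M.μ0 x.1 * π x.1 x.2) *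
        resolvent M π (fun x => if x.1 = s then (1 : ℝ) else 0) x) * g s := by
    rw [Finset.mul_sum]
    refine Finset.sum_congr rfl fun s _ => ?_
    unfold dOcc
    rw [(hasSum_prob M π hπ (fun x => if x.1 = s then (1 : ℝ) else 0)).tsum_eq]
    field_simp
  rw [h3]
  refine (hasSum_of_eq (fun t => Eq.symm ?_) h1).unique h2
  simp only [mul_assoc, ← Finset.mul_sum, Finset.sum_mul]
  rw [Finset.sum_comm]
  congr 1
  refine Finset.sum_congr rfl fun h _ => ?_
  rw [← Finset.mul_sum]
  simp

theorem stepOp_fst (M : MDP S A) (π : S → A → ℝ) (f : S × A → ℝ) (x : S × A) :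
    stepOp M π f x = ∑ s, M.p x.1 x.2 s * ∑ a, π s a * f (s, a) := by
  rw [stepOp_apply, Fintype.sum_prod_type]
  refine Finset.sum_congr rfl fun s _ => ?_
  rw [Finset.mul_sum]
  exact Finset.sum_congr rfl fun a _ => mul_assoc _ _ _

theorem sum_const_policy (π : S → A → ℝ) (hπ : IsPolicy π) (s : S) (c : ℝ) :
    ∑ a, π s a * c = c := by
  rw [← Finset.sum_mul, hπ.2, one_mul]

theorem start_sum (M : MDP S A) (π : S → A → ℝ) (f : S × A → ℝ) :
    ∑ x : S × A, (M.μ0 x.1 * π x.1 x.2) * f x = ∑ s, M.μ0 s * ∑ a, π s a * f (s, a) := by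
  rw [Fintype.sum_prod_type]
  refine Finset.sum_congr rfl fun s _ => ?_
  rw [Finset.mul_sum]
  exact Finset.sum_congr rfl fun a _ => mul_assoc _ _ _

/-- Averaging a function over actions does not change its discounted expectation. -/
theorem avg_actions (M : MDP S A) (π : S → A → ℝ) (hπ : IsPolicy π) (f : S × A → ℝ) :
    ∑ x : S × A, (M.μ0 x.1 * π x.1 x.2) *
        resolvent M π (fun x => ∑ a, π x.1 a * f (x.1, a)) x =
      ∑ x : S × A, (M.μ0 x.1 * π x.1 x.2) * resolvent M π f x := by
  have hs : stepOp M π (fun x => ∑ a, π x.1 a * f (x.1, a)) = stepOp M π f := by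
    funext x
    rw [stepOp_fst, stepOp_fst]
    simp only [sum_const_policy π hπ]
  have e : ∀ g : S × A → ℝ, ∑ x : S × A, (M.μ0 x.1 * π x.1 x.2) * resolvent M π g x =
      ∑ s, M.μ0 s * ∑ a, π s a * g (s, a) +
        ∑ x : S × A, (M.μ0 x.1 * π x.1 x.2) * (M.γ * resolvent M π (stepOp M π g) x) := by
    intro g
    rw [← start_sum, ← Finset.sum_add_distrib]
    refine Finset.sum_congr rfl fun x _ => ?_
    rw [resolvent_step M π hπ g, mul_add]
  rw [e, e f, hs]
  simp only [sum_const_policy π hπ]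

theorem bellman (M : MDP S A) (π π' : S → A → ℝ) (hπ : IsPolicy π) (hπ' : IsPolicy π')
    (x : S × A) :
    Qval M π x.1 x.2 = M.r x.1 x.2 + M.γ * stepOp M π' (fun y => Vval M π y.1) x := by
  rw [Qval_eq, resolvent_step M π hπ, ← resolvent_comm M π hπ, stepOp_fst, stepOp_fst]
  simp only [sum_const_policy π' hπ', ← Qval_eq]
  rfl

/-- Performance difference lemma (Kakade–Langford):
`η(π̃) − η(π) = (1/(1−γ)) ∑_s d^{π̃}(s) ∑_a π̃(a|s) A^π(s,a)`. -/
theorem performance_difference_lemma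
    (M : MDP S A) (π π' : S → A → ℝ)
    (hπ : IsPolicy π) (hπ' : IsPolicy π') :
    ηval M π' - ηval M π =
      (1 - M.γ)⁻¹ * ∑ s, dOcc M π' s * ∑ a, π' s a * Adv M π s a := by
  rw [dOcc_sum M π' hπ' (fun s => ∑ a, π' s a * Adv M π s a)]
  have havg := avg_actions M π' hπ' (fun x => Adv M π x.1 x.2)
  simp only at havg
  rw [havg, ηval_eq M π' hπ', ηval_eq_V M π hπ]
  have hadv : (fun x : S × A => Adv M π x.1 x.2) =
      ((fun x => M.r x.1 x.2) + M.γ • stepOp M π' (fun y => Vval M π y.1)) +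
        (-1 : ℝ) • (fun y => Vval M π y.1) := by
    funext x
    simp only [Pi.add_apply, Pi.smul_apply, smul_eq_mul]
    unfold Adv
    rw [bellman M π π' hπ hπ' x]
    ring
  have hV : ∑ s, M.μ0 s * Vval M π s =
      ∑ x : S × A, (M.μ0 x.1 * π' x.1 x.2) * Vval M π x.1 := by
    rw [start_sum M π' (fun x => Vval M π x.1)]
    simp only [sum_const_policy π' hπ']
  rw [hV, hadv, ← Finset.sum_sub_distrib]
  refine Finset.sum_congr rfl fun x _ => ?_
  rw [resolvent_add_smul M π' hπ', resolvent_add_smul M π' hπ',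
    resolvent_step M π' hπ' (fun y => Vval M π y.1)]
  ring

end PolicyOpt
end
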